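/- For every natural number n ≥ 3, every dominating broadcast on the cycle graph C_n has cost at least ⌈n/3⌉. -/

import Mathlib

open SimpleGraph Finset

/-- A dominating broadcast on `G`: every vertex is within distance `f u` of some
vertex `u` with `f u ≥ 1` (distances are measured by the graph metric `G.dist`). -/
def IsDominatingBroadcast {V : Type*} (G : SimpleGraph V) (f : V → ℕ) : Prop :=
  ∀ v : V, ∃ u : V, 1 ≤ f u ∧ G.dist u v ≤ f u

/-!
In a connected graph of maximum degree at most `2`, every sphere of positive radius has at most two
vertices, since a vertex off the centre has a neighbour closer to the centre and hence at most one
farther away. So a ball of radius `k` has at most `2 * k + 1 ≤ 3 * k` vertices for `k ≥ 1`, and the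
balls of radius `f u` around the broadcasting vertices, which cover the graph, have at most
`3 * ∑ u, f u` vertices altogether.
-/

section Growth

variable {V : Type*} {G : SimpleGraph V} {u v : V}

theorem exists_adj_dist_add_one_eq (h : G.dist u v ≠ 0) :
    ∃ w, G.Adj v w ∧ G.dist u w + 1 = G.dist u v := by
  obtain ⟨p, hp⟩ := (Reachable.of_dist_ne_zero h).symm.exists_walk_length_eq_dist
  rw [dist_comm] at hp
  cases p with
  | nil => exact absurd hp.symm h
  | @cons _ w _ hvw q =>
    have hq : G.dist u w ≤ q.length := dist_comm (G := G) ▸ dist_le q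
    have hstep := hvw.symm.diff_dist_adj (u := u)
    rw [Walk.length_cons] at hp
    exact ⟨w, hvw, by omega⟩

theorem encard_neighborSet_eq_degree [Fintype (G.neighborSet v)] :
    (G.neighborSet v).encard = G.degree v := by
  rw [Set.encard_eq_coe_toFinset_card, ← neighborFinset_def, card_neighborFinset_eq_degree]

theorem encard_adj_dist_eq_add_one_le [Fintype (G.neighborSet v)] (h : G.dist u v ≠ 0) :
    {w | G.Adj v w ∧ G.dist u w = G.dist u v + 1}.encard ≤ (G.degree v - 1 : ℕ) := by
  obtain ⟨p, hvp, hp⟩ := exists_adj_dist_add_one_eq h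
  have hsub : {w | G.Adj v w ∧ G.dist u w = G.dist u v + 1} ⊆ G.neighborSet v \ {p} := by
    rintro w ⟨hvw, hw⟩
    exact ⟨hvw, by rintro rfl; omega⟩
  calc _ ≤ (G.neighborSet v \ {p}).encard := Set.encard_le_encard hsub
    _ = (G.degree v - 1 : ℕ) := by
      rw [Set.encard_sdiff_singleton_of_mem ((G.mem_neighborSet v p).2 hvp),
        encard_neighborSet_eq_degree]
      norm_cast

variable [G.LocallyFinite] {d : ℕ}

theorem encard_dist_eq_add_one_le_of_degree_le (hd : ∀ v, G.degree v ≤ d) (u : V) (k : ℕ) :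
    {v | G.dist u v = k + 1}.encard ≤ (d * (d - 1) ^ k : ℕ) := by
  induction k with
  | zero =>
    have hsphere : {v | G.dist u v = 0 + 1} = G.neighborSet u := by
      ext v
      exact dist_eq_one_iff_adj
    rw [hsphere, encard_neighborSet_eq_degree, pow_zero, mul_one]
    exact_mod_cast hd u
  | succ k ih =>
    have hfin : {v | G.dist u v = k + 1}.Finite := Set.finite_of_encard_le_coe ih
    lift {v | G.dist u v = k + 1} to Finset V using hfin with S hS
    have hmem (v : V) : v ∈ S ↔ G.dist u v = k + 1 := Set.ext_iff.1 hS v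
    let children (v : V) : Set V := {w | G.Adj v w ∧ G.dist u w = G.dist u v + 1}
    have hcover : {w | G.dist u w = k + 1 + 1} ⊆ ⋃ v ∈ S, children v := by
      intro w (hw : G.dist u w = k + 1 + 1)
      obtain ⟨v, hwv, hv⟩ := exists_adj_dist_add_one_eq (hw.trans_ne (k + 1).succ_ne_zero)
      exact Set.mem_biUnion ((hmem v).2 (by omega)) ⟨hwv.symm, hv.symm⟩
    have hchildren (v : V) (hv : v ∈ S) : (children v).encard ≤ (d - 1 : ℕ) :=
      calc (children v).encard ≤ (G.degree v - 1 : ℕ) :=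
            encard_adj_dist_eq_add_one_le (((hmem v).1 hv).trans_ne k.succ_ne_zero)
        _ ≤ (d - 1 : ℕ) := by gcongr; exact hd v
    rw [Set.encard_coe_eq_coe_finsetCard] at ih
    calc _ ≤ (⋃ v ∈ S, children v).encard := Set.encard_le_encard hcover
      _ ≤ ∑ v ∈ S, (children v).encard := S.set_encard_biUnion_le children
      _ ≤ #S • ((d - 1 : ℕ) : ℕ∞) := S.sum_le_card_nsmul _ _ hchildren
      _ = (#S : ℕ∞) * (d - 1 : ℕ) := nsmul_eq_mul _ _
      _ ≤ (d * (d - 1) ^ k : ℕ) * (d - 1 : ℕ) := by gcongr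
      _ = (d * (d - 1) ^ (k + 1) : ℕ) := by rw [← Nat.cast_mul, pow_succ, mul_assoc]

theorem encard_dist_le_of_degree_le (hG : G.Connected) (hd : ∀ v, G.degree v ≤ d) (u : V)
    (k : ℕ) :
    {v | G.dist u v ≤ k}.encard ≤ (1 + d * ∑ i ∈ range k, (d - 1) ^ i : ℕ) := by
  induction k with
  | zero => simp [hG.dist_eq_zero_iff]
  | succ k ih =>
    have hsplit : {v | G.dist u v ≤ k + 1} = {v | G.dist u v ≤ k} ∪ {v | G.dist u v = k + 1} :=
      Set.ext fun v ↦ Nat.le_succ_iff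
    calc _ ≤ {v | G.dist u v ≤ k}.encard + {v | G.dist u v = k + 1}.encard :=
          hsplit ▸ Set.encard_union_le _ _
      _ ≤ (1 + d * ∑ i ∈ range k, (d - 1) ^ i : ℕ) + (d * (d - 1) ^ k : ℕ) :=
          add_le_add ih (encard_dist_eq_add_one_le_of_degree_le hd u k)
      _ = (1 + d * ∑ i ∈ range (k + 1), (d - 1) ^ i : ℕ) := by
          rw [← Nat.cast_add, sum_range_succ, mul_add, add_assoc]

end Growth

theorem IsDominatingBroadcast.card_le_mul_cost {V : Type*} [Fintype V] {G : SimpleGraph V}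
    {f : V → ℕ} (hf : IsDominatingBroadcast G f) {c : ℕ}
    (hball : ∀ u, 1 ≤ f u → {v | G.dist u v ≤ f u}.encard ≤ (c * f u : ℕ)) :
    Fintype.card V ≤ c * ∑ v, f v := by
  let broadcasters : Finset V := {u | 1 ≤ f u}
  have hcover : (Set.univ : Set V) ⊆ ⋃ u ∈ broadcasters, {v | G.dist u v ≤ f u} := by
    intro v _
    obtain ⟨u, hu, huv⟩ := hf v
    exact Set.mem_biUnion (mem_filter.2 ⟨mem_univ u, hu⟩) huv
  have hcard : (Fintype.card V : ℕ∞) ≤ (c * ∑ v, f v : ℕ) :=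
    calc (Fintype.card V : ℕ∞) = (Set.univ : Set V).encard := by simp
      _ ≤ (⋃ u ∈ broadcasters, {v | G.dist u v ≤ f u}).encard := Set.encard_le_encard hcover
      _ ≤ ∑ u ∈ broadcasters, {v | G.dist u v ≤ f u}.encard := broadcasters.set_encard_biUnion_le _
      _ ≤ ∑ u ∈ broadcasters, ((c * f u : ℕ) : ℕ∞) :=
          sum_le_sum fun u hu ↦ hball u (mem_filter.1 hu).2
      _ ≤ ∑ u, ((c * f u : ℕ) : ℕ∞) := sum_le_sum_of_subset (subset_univ _)
      _ = (c * ∑ v, f v : ℕ) := by rw [← Nat.cast_sum, mul_sum]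
  exact_mod_cast hcard

theorem cycleGraph_broadcast_cost_lower_bound_general {V : Type*} [Fintype V] {G : SimpleGraph V}
    [G.LocallyFinite] (hG : G.Connected) (hd : ∀ v, G.degree v ≤ 2) {f : V → ℕ}
    (hf : IsDominatingBroadcast G f) :
    ⌈(Fintype.card V : ℚ) / 3⌉₊ ≤ ∑ v, f v := by
  have hball (u : V) (hu : 1 ≤ f u) : {v | G.dist u v ≤ f u}.encard ≤ (3 * f u : ℕ) :=
    calc _ ≤ ((1 + 2 * ∑ i ∈ range (f u), (2 - 1) ^ i : ℕ) : ℕ∞) :=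
          encard_dist_le_of_degree_le hG hd u (f u)
      _ = (1 + 2 * f u : ℕ) := by simp
      _ ≤ (3 * f u : ℕ) := by norm_cast; omega
  rw [Nat.ceil_le, div_le_iff₀' three_pos]
  exact_mod_cast hf.card_le_mul_cost hball

/-- For every natural number `n ≥ 3`, every dominating broadcast on the
cycle graph `C_n` has cost at least `⌈n/3⌉`. -/
theorem cycleGraph_broadcast_cost_lower_bound (n : ℕ) (hn : 3 ≤ n)
    (f : Fin n → ℕ) (hf : IsDominatingBroadcast (SimpleGraph.cycleGraph n) f) :
    ⌈(n : ℚ) / 3⌉₊ ≤ ∑ v, f v := by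
  obtain ⟨m, rfl⟩ := Nat.exists_eq_add_of_le' hn
  simpa only [Fintype.card_fin] using cycleGraph_broadcast_cost_lower_bound_general
    cycleGraph_connected (fun _ ↦ cycleGraph_degree_three_le.le) hf
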